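/- Let K be an infinite field and G a graph. Then the arithmetical rank of the cover ideal after localization at the irrelevant maximal ideal satisfies ara(J(G)S_m) ≤ gdim(G); in particular ara(J(G)S_m) ≤ ν(G)+1, where ν(G) is the matching number of G. -/

import Mathlib

open MvPolynomial

/-- The irrelevant maximal ideal `m = (x_1, …, x_n)` of `S = K[x_1,…,x_n]`. -/
noncomputable def mIdeal (K : Type*) [Field K] (n : ℕ) : Ideal (MvPolynomial (Fin n) K) :=
  Ideal.span (Set.range MvPolynomial.X)

theorem mIdeal_eq_ker (K : Type*) [Field K] (n : ℕ) :
    mIdeal K n = RingHom.ker (constantCoeff : MvPolynomial (Fin n) K →+* K) := by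
  apply le_antisymm
  · rw [mIdeal, Ideal.span_le]
    rintro _ ⟨i, rfl⟩
    simp [RingHom.mem_ker]
  · intro p hp
    rw [RingHom.mem_ker] at hp
    rw [mIdeal, ← Set.image_univ, mem_ideal_span_X_image]
    intro m hm
    by_contra h
    push_neg at h
    have hm0 : m = 0 := by
      ext i
      exact h i (Set.mem_univ i)
    subst hm0
    exact (mem_support_iff.mp hm) (by simpa [constantCoeff_eq] using hp)

instance mIdeal_isMaximal (K : Type*) [Field K] (n : ℕ) : (mIdeal K n).IsMaximal := by
  rw [mIdeal_eq_ker]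
  exact RingHom.ker_isMaximal_of_surjective _ fun a => ⟨MvPolynomial.C a, by simp⟩

instance mIdeal_isPrime (K : Type*) [Field K] (n : ℕ) : (mIdeal K n).IsPrime :=
  (mIdeal_isMaximal K n).isPrime

/-- The localization `S_m` of the polynomial ring at the irrelevant maximal ideal. -/
noncomputable abbrev SLoc (K : Type*) [Field K] (n : ℕ) : Type _ :=
  Localization.AtPrime (mIdeal K n)

/-- The cover ideal `J(G) = ⋂_{{i,j} ∈ E} (x_i, x_j)`. -/
noncomputable def coverIdeal (K : Type*) [Field K] {n : ℕ} (G : SimpleGraph (Fin n)) :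
    Ideal (MvPolynomial (Fin n) K) :=
  ⨅ e ∈ G.edgeSet, Ideal.span (MvPolynomial.X '' {v : Fin n | v ∈ e})

/-- The arithmetical rank of an ideal: the least `r` such that some `r` elements generate an
ideal with the same radical. -/
noncomputable def ara {R : Type*} [CommRing R] (I : Ideal R) : ℕ :=
  sInf {r : ℕ | ∃ f : Fin r → R, Ideal.radical (Ideal.span (Set.range f)) = Ideal.radical I}

/-- A free parameter pair. -/
def IsFreeParameterPair {n r : ℕ} (G : SimpleGraph (Fin n)) (a b : Fin r → Fin n) : Prop :=
  Function.Injective a ∧ Function.Injective b ∧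
  (∀ i j : Fin r, ¬ G.Adj (a i) (a j)) ∧
  (∀ i j : Fin r, a i ≠ b j) ∧
  (∀ i : Fin r, G.Adj (a i) (b i)) ∧
  (∀ i j : Fin r, G.Adj (a i) (b j) → i ≤ j)

/-- `G` has a free parameter set of cardinality `r`. -/
def HasFreeParameterSet {n : ℕ} (G : SimpleGraph (Fin n)) (r : ℕ) : Prop :=
  ∃ a b : Fin r → Fin n, IsFreeParameterPair G a b

/-- The graphical dimension. -/
noncomputable def gdim {n : ℕ} (G : SimpleGraph (Fin n)) : ℕ :=
  sSup {r : ℕ | HasFreeParameterSet G r} + 1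

/-- `G` has a matching of `r` pairwise disjoint edges. -/
def HasMatchingOfSize {n : ℕ} (G : SimpleGraph (Fin n)) (r : ℕ) : Prop :=
  ∃ e : Fin r → Fin n × Fin n, (∀ i, G.Adj (e i).1 (e i).2) ∧
    ∀ i j : Fin r, i ≠ j →
      (e i).1 ≠ (e j).1 ∧ (e i).1 ≠ (e j).2 ∧ (e i).2 ≠ (e j).1 ∧ (e i).2 ≠ (e j).2

/-- The matching number `ν(G)`. -/
noncomputable def matchingNumber {n : ℕ} (G : SimpleGraph (Fin n)) : ℕ :=
  sSup {r : ℕ | HasMatchingOfSize G r}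

/-!
The exponent vectors `a : V → ℕ` with `k ≤ a p + a q` on every edge are the integral points of the
`k`-th dilate of the polyhedron `{a ≥ 0, a p + a q ≥ 1}`. Choose, in one common degree, an interior
monomial for each bounded face of this polyhedron, attach to each face a rank that drops strictly
on passing to a proper subface, and let the generators be the sums of the chosen monomials over the
faces of each fixed rank.

If a prime `Q` of a local ring contains all these sums, take a valuation with support `Q` that is
less than one on the maximal ideal. When no edge has both its variables in `Q`, the exponents of
largest value form a bounded face `τ`, and a chosen monomial is of largest value exactly when its
face lies in `τ`; so among the faces of the rank of `τ` only `τ` itself counts, its monomial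
dominates the sum, and the sum is not in `Q`, a contradiction. The ranks are less than `gdim G`
because the rank of a face is the largest number of distinct values in `(0, k / 2)` of an interior
point, and vertices carrying such values, in decreasing order, form a free parameter set.
-/

section Covers

variable {V : Type*} {G : SimpleGraph V} {k l N : ℕ} {a b : V → ℕ} {τ : Set (V × V)} {p q : V}

/-- The `k`-covers of `G`: weightings of the vertices for which the ends of every edge have total
weight at least `k`. They are the exponent vectors of the monomials in the `k`-th symbolic power of
the cover ideal. -/
def IsCover (G : SimpleGraph V) (k : ℕ) (a : V → ℕ) : Prop :=
  ∀ ⦃p q⦄, G.Adj p q → k ≤ a p + a q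

/-- The basic `k`-covers: minimality of a `k`-cover is expressed by a neighbour that blocks
lowering the weight, for every vertex of positive weight. -/
def IsBasicCover (G : SimpleGraph V) (k : ℕ) (a : V → ℕ) : Prop :=
  IsCover G k a ∧ ∀ p, 0 < a p → ∃ q, G.Adj p q ∧ a p + a q = k

/-- The constraints that a `k`-cover satisfies with equality, which determine the face of the
polyhedron of covers in whose relative interior it lies. The diagonal pair `(p, p)` encodes the
constraint `0 ≤ a p`. -/
def tightSet (G : SimpleGraph V) (k : ℕ) (a : V → ℕ) : Set (V × V) :=
  {e | (G.Adj e.1 e.2 ∧ a e.1 + a e.2 = k) ∨ (e.1 = e.2 ∧ a e.1 = 0)}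

/-- The basic covers of positive degree in the relative interior of the face with set of tight
constraints `τ`. -/
structure IsFaceCover (G : SimpleGraph V) (τ : Set (V × V)) (k : ℕ) (a : V → ℕ) : Prop where
  pos : 0 < k
  isBasicCover : IsBasicCover G k a
  tightSet_eq : tightSet G k a = τ

/-- The bounded faces of the polyhedron of covers, encoded by their tight constraints, so that a
smaller face is a larger element. -/
abbrev BoundedFace (G : SimpleGraph V) : Type _ :=
  {τ : Set (V × V) // ∃ k a, IsFaceCover G τ k a}

theorem mem_tightSet_of_adj (h : G.Adj p q) : (p, q) ∈ tightSet G k a ↔ a p + a q = k := by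
  simp [tightSet, h, h.ne]

theorem diag_mem_tightSet : (p, p) ∈ tightSet G k a ↔ a p = 0 := by
  simp [tightSet]

theorem IsCover.add (ha : IsCover G k a) (hb : IsCover G l b) : IsCover G (k + l) (a + b) := by
  intro p q h
  have := ha h
  have := hb h
  simp only [Pi.add_apply]
  omega

theorem IsCover.nsmul (ha : IsCover G k a) (N : ℕ) : IsCover G (N * k) (N • a) := by
  intro p q h
  simpa [mul_add] using Nat.mul_le_mul_left N (ha h)

theorem IsBasicCover.apply_le (ha : IsBasicCover G k a) (p : V) : a p ≤ k := by
  rcases Nat.eq_zero_or_pos (a p) with h | h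
  · omega
  · obtain ⟨q, -, hq⟩ := ha.2 p h
    omega

theorem IsBasicCover.of_tightSet_subset (ha : IsBasicCover G k a) (hb : IsCover G l b)
    (h : tightSet G k a ⊆ tightSet G l b) : IsBasicCover G l b := by
  refine ⟨hb, fun p hp => ?_⟩
  have hap : 0 < a p := by
    by_contra! h0
    exact hp.ne' (diag_mem_tightSet.1 (h (diag_mem_tightSet.2 (Nat.le_zero.1 h0))))
  obtain ⟨q, hpq, hq⟩ := ha.2 p hap
  exact ⟨q, hpq, (mem_tightSet_of_adj hpq).1 (h ((mem_tightSet_of_adj hpq).2 hq))⟩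

theorem IsBasicCover.exists_add_eq_and_add_eq (hb : IsBasicCover G l b)
    (h : tightSet G l b ⊆ tightSet G k a) (hp : 0 < b p) :
    ∃ q, b p + b q = l ∧ a p + a q = k := by
  obtain ⟨q, hpq, hq⟩ := hb.2 p hp
  exact ⟨q, hq, (mem_tightSet_of_adj hpq).1 (h ((mem_tightSet_of_adj hpq).2 hq))⟩

theorem tightSet_add (ha : IsCover G k a) (hb : IsCover G l b) :
    tightSet G (k + l) (a + b) = tightSet G k a ∩ tightSet G l b := by
  ext ⟨p, q⟩
  by_cases h : G.Adj p q
  · have := ha h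
    have := hb h
    simp only [Set.mem_inter_iff, mem_tightSet_of_adj h, Pi.add_apply]
    omega
  · simp only [tightSet, Set.mem_inter_iff, Set.mem_ofPred_eq, h, false_and, false_or,
      Pi.add_apply, Nat.add_eq_zero_iff]
    tauto

theorem tightSet_nsmul (hN : 0 < N) : tightSet G (N * k) (N • a) = tightSet G k a := by
  ext ⟨p, q⟩
  simp [tightSet, ← mul_add, hN.ne']

theorem IsFaceCover.nsmul (ha : IsFaceCover G τ k a) (hN : 0 < N) :
    IsFaceCover G τ (N * k) (N • a) where
  pos := Nat.mul_pos hN ha.pos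
  isBasicCover :=
    ha.isBasicCover.of_tightSet_subset (ha.isBasicCover.1.nsmul N) (tightSet_nsmul hN).ge
  tightSet_eq := (tightSet_nsmul hN).trans ha.tightSet_eq

theorem IsFaceCover.nsmul_add (hb : IsFaceCover G τ l b) (ha : IsCover G k a)
    (h : τ ⊆ tightSet G k a) (hN : 0 < N) : IsFaceCover G τ (N * k + l) (N • a + b) := by
  have hτ : tightSet G (N * k + l) (N • a + b) = τ := by
    rw [tightSet_add (ha.nsmul N) hb.isBasicCover.1, tightSet_nsmul hN, hb.tightSet_eq,
      Set.inter_eq_right.2 h]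
  exact ⟨Nat.add_pos_right _ hb.pos, hb.isBasicCover.of_tightSet_subset
    ((ha.nsmul N).add hb.isBasicCover.1) (hb.tightSet_eq.trans hτ.symm).subset, hτ⟩

theorem exists_isFaceCover_two_mul [Finite V] (G : SimpleGraph V) :
    ∃ e, ∃ A : BoundedFace G → V → ℕ, ∀ F : BoundedFace G, IsFaceCover G F (2 * e) (A F) := by
  classical
  have := Fintype.ofFinite (BoundedFace G)
  choose k a h using fun F : BoundedFace G => F.2
  choose m hm using fun F => Finset.dvd_prod_of_mem k (Finset.mem_univ F)
  refine ⟨∏ F, k F, fun F => (2 * m F) • a F, fun F => ?_⟩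
  have hprod : 0 < k F * m F := hm F ▸ Finset.prod_pos fun F' _ => (h F').pos
  rw [hm F, mul_comm (k F), ← mul_assoc]
  exact (h F).nsmul (Nat.mul_pos two_pos (Nat.pos_of_mul_pos_left hprod))

theorem IsCover.isBasicCover_or_exists_eq_add_single [DecidableEq V] (ha : IsCover G k a) :
    IsBasicCover G k a ∨ ∃ p b, IsCover G k b ∧ a = b + Pi.single p 1 := by
  refine or_iff_not_imp_left.2 fun hbasic => ?_
  obtain ⟨p, hp, hlt⟩ : ∃ p, 0 < a p ∧ ∀ q, G.Adj p q → a p + a q ≠ k := by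
    simpa [IsBasicCover, ha] using hbasic
  refine ⟨p, a - Pi.single p 1, fun i j hij => ?_, (tsub_add_cancel_of_le ?_).symm⟩
  · have := ha hij
    rcases eq_or_ne i p with rfl | hi
    · have := hlt j hij
      simp only [Pi.sub_apply, Pi.single_eq_same, Pi.single_eq_of_ne hij.ne']
      omega
    · rcases eq_or_ne j p with rfl | hj
      · have := hlt i hij.symm
        simp only [Pi.sub_apply, Pi.single_eq_same, Pi.single_eq_of_ne hi]
        omega
      · simpa [hi, hj] using this
  · intro i
    rcases eq_or_ne i p with rfl | hi
    · rw [Pi.single_eq_same]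
      exact hp
    · rw [Pi.single_eq_of_ne hi]
      exact Nat.zero_le _

theorem IsCover.exists_eq_add (ha : IsCover G (k + 2) a) :
    ∃ c b, IsCover G 2 c ∧ c ≤ 2 ∧ IsCover G k b ∧ a = c + b := by
  let c : V → ℕ := fun p => if a p = 0 then 0 else if a p < k + 2 then 1 else 2
  have hc (p : V) : (a p = 0 ∧ c p = 0) ∨ (0 < a p ∧ a p < k + 2 ∧ c p = 1) ∨
      (k + 2 ≤ a p ∧ c p = 2) := by
    simp only [c]
    split_ifs <;> omega
  have hca : c ≤ a := Pi.le_def.2 fun p => by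
    have := hc p
    omega
  refine ⟨c, a - c, fun p q h => ?_, fun p => ?_, fun p q h => ?_,
    (add_tsub_cancel_of_le hca).symm⟩
  · have := ha h
    have := hc p
    have := hc q
    omega
  · have := hc p
    simp only [Pi.ofNat_apply]
    omega
  · have := ha h
    have := hc p
    have := hc q
    simp only [Pi.sub_apply]
    omega

theorem IsBasicCover.exists_nsmul_eq_add (ha : IsBasicCover G k a) (hb : IsCover G l b)
    (h : tightSet G l b ⊆ tightSet G k a) :
    ∃ c, IsCover G (k * (l - 1)) c ∧ k • b = a + c := by
  have hle : a ≤ k • b := fun p => by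
    rcases Nat.eq_zero_or_pos (b p) with h0 | h0
    · simp [diag_mem_tightSet.1 (h (diag_mem_tightSet.2 h0))]
    · exact (ha.apply_le p).trans (Nat.le_mul_of_pos_right _ h0)
  refine ⟨k • b - a, fun p q hpq => ?_, (add_tsub_cancel_of_le hle).symm⟩
  have hp : a p ≤ k * b p := hle p
  have hq : a q ≤ k * b q := hle q
  simp only [Pi.sub_apply, Pi.smul_apply, smul_eq_mul, Nat.mul_sub_one]
  rcases (hb hpq).eq_or_lt with heq | hlt
  · have hapq := (mem_tightSet_of_adj hpq).1 (h ((mem_tightSet_of_adj hpq).2 heq.symm))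
    have : k * l = k * b p + k * b q := by rw [heq, mul_add]
    omega
  · have : k * l + k ≤ k * b p + k * b q := by
      simpa [mul_add] using Nat.mul_le_mul_left k (Nat.succ_le_of_lt hlt)
    have := ha.apply_le p
    have := ha.apply_le q
    omega

end Covers

section FaceRank

variable {V : Type*} [Fintype V] {G : SimpleGraph V} {k l N : ℕ} {a b : V → ℕ} {p : V}

/-- The values of a `k`-cover strictly between `0` and `k / 2`. Every other value of a basic
`k`-cover is `0`, `k / 2`, `k`, or `k - c` for a low value `c`. -/
def lowValues (k : ℕ) (a : V → ℕ) : Finset ℕ :=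
  {c ∈ Finset.univ.image a | 0 < c ∧ 2 * c < k}

/-- The rank of a face is the largest number of low values of a cover in its interior. It plays the
role of the dimension of the face. -/
noncomputable def faceRank (F : BoundedFace G) : ℕ :=
  sSup {r | ∃ k a, IsFaceCover G F k a ∧ (lowValues k a).card = r}

theorem apply_mem_lowValues : a p ∈ lowValues k a ↔ 0 < a p ∧ 2 * a p < k := by
  simp [lowValues]

theorem exists_apply_eq_of_mem_lowValues {c : ℕ} (hc : c ∈ lowValues k a) : ∃ p, a p = c := by
  simpa using (Finset.mem_filter.1 hc).1

theorem card_lowValues_le (k : ℕ) (a : V → ℕ) : (lowValues k a).card ≤ Fintype.card V :=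
  (Finset.card_filter_le _ _).trans Finset.card_image_le

theorem bddAbove_card_lowValues (F : BoundedFace G) :
    BddAbove {r | ∃ k a, IsFaceCover G F k a ∧ (lowValues k a).card = r} := by
  refine ⟨Fintype.card V, ?_⟩
  rintro _ ⟨k, a, -, rfl⟩
  exact card_lowValues_le k a

theorem IsFaceCover.card_lowValues_le_faceRank {F : BoundedFace G} (ha : IsFaceCover G F k a) :
    (lowValues k a).card ≤ faceRank F :=
  le_csSup (bddAbove_card_lowValues F) ⟨k, a, ha, rfl⟩

theorem exists_card_lowValues_eq_faceRank (F : BoundedFace G) :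
    ∃ k a, IsFaceCover G F k a ∧ (lowValues k a).card = faceRank F := by
  obtain ⟨k, a, ha⟩ := F.2
  exact Nat.sSup_mem (s := {r | ∃ k a, IsFaceCover G F k a ∧ (lowValues k a).card = r})
    ⟨_, k, a, ha, rfl⟩ (bddAbove_card_lowValues F)

theorem nsmul_add_apply_mem_lowValues (hN : l < N) (hb : b p ≤ l) (hpos : 0 < a p ∨ 0 < b p)
    (hlow : 2 * a p < k) : (N • a + b) p ∈ lowValues (N * k + l) (N • a + b) := by
  rw [apply_mem_lowValues]
  simp only [Pi.add_apply, Pi.smul_apply, smul_eq_mul]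
  constructor
  · rcases hpos with h | h
    · exact Nat.add_pos_left (Nat.mul_pos (by omega) h) _
    · exact Nat.add_pos_right _ h
  · have := Nat.mul_le_mul_left N (Nat.succ_le_of_lt hlow)
    nlinarith

theorem IsBasicCover.two_mul_apply_eq (hb : IsBasicCover G l b) (hk : 0 < k) (hN : l < N)
    (h : tightSet G l b ⊆ tightSet G k a)
    (hlow : ∀ p, (N • a + b) p ∈ lowValues (N * k + l) (N • a + b) → a p ∈ lowValues k a)
    (hp : 2 * a p = k) : 2 * b p = l := by
  have le_two_mul (q : V) (hq : 2 * a q = k) : l ≤ 2 * b q := by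
    by_contra! hbq
    have hc : (N • a + b) q ∈ lowValues (N * k + l) (N • a + b) := by
      rw [apply_mem_lowValues, Pi.add_apply, Pi.smul_apply, smul_eq_mul, ← hq]
      exact ⟨Nat.add_pos_left (Nat.mul_pos (by omega) (by omega)) _, by nlinarith⟩
    exact (apply_mem_lowValues.1 (hlow q hc)).2.ne hq
  refine (le_two_mul p hp).antisymm' ?_
  by_contra! hbp
  obtain ⟨q, hq, haq⟩ := hb.exists_add_eq_and_add_eq h (by omega : 0 < b p)
  have := le_two_mul q (by omega)
  omega

/-- The hypotheses `hlow` and `hinj` say that moving from `a` towards `b` neither creates nor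
splits a low value. -/
theorem IsBasicCover.tightSet_subset_of_lowValues (hb : IsBasicCover G l b) (hk : 0 < k)
    (hN : l < N) (h : tightSet G l b ⊆ tightSet G k a)
    (hlow : ∀ p, (N • a + b) p ∈ lowValues (N * k + l) (N • a + b) → a p ∈ lowValues k a)
    (hinj : ∀ p q, a p ∈ lowValues k a → a p = a q → b p = b q) :
    tightSet G k a ⊆ tightSet G l b := by
  have apply_eq_zero (p : V) (hp : a p = 0) : b p = 0 := by
    by_contra hbp
    have hc := nsmul_add_apply_mem_lowValues hN (hb.apply_le p) (.inr (by omega))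
      (show 2 * a p < k by omega)
    exact (apply_mem_lowValues.1 (hlow p hc)).1.ne' hp
  have add_le (p q : V) (hpq : a p + a q = k) (hle : a p ≤ a q) : b p + b q ≤ l := by
    rcases hle.eq_or_lt with heq | hlt
    · have := hb.two_mul_apply_eq hk hN h hlow (by omega : 2 * a p = k)
      have := hb.two_mul_apply_eq hk hN h hlow (by omega : 2 * a q = k)
      omega
    rcases Nat.eq_zero_or_pos (b q) with hq | hq
    · have := hb.apply_le p
      omega
    obtain ⟨r, hr, har⟩ := hb.exists_add_eq_and_add_eq h hq
    suffices b p ≤ b r by omega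
    rcases Nat.eq_zero_or_pos (a p) with h0 | h0
    · simp [apply_eq_zero p h0]
    · exact (hinj p r (apply_mem_lowValues.2 ⟨h0, by omega⟩) (by omega)).le
  rintro ⟨p, q⟩ (⟨hadj, hpq⟩ | ⟨rfl : p = q, hp⟩)
  · refine (mem_tightSet_of_adj hadj).2 (le_antisymm ?_ (hb.1 hadj))
    rcases le_total (a p) (a q) with hle | hle
    · exact add_le p q hpq hle
    · exact (add_comm _ _).trans_le (add_le q p ((add_comm _ _).trans hpq) hle)
  · exact diag_mem_tightSet.2 (apply_eq_zero p hp)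

theorem IsBasicCover.card_lowValues_lt (hb : IsBasicCover G l b) (hk : 0 < k) (hN : l < N)
    (h : tightSet G l b ⊂ tightSet G k a) :
    (lowValues k a).card < (lowValues (N * k + l) (N • a + b)).card := by
  by_contra! hcard
  have div_eq (p : V) : (N • a + b) p / N = a p := by
    simp [Nat.mul_add_div (Nat.zero_lt_of_lt hN),
      Nat.div_eq_of_lt ((hb.apply_le p).trans_lt hN)]
  have himage : lowValues k a ⊆ (lowValues (N * k + l) (N • a + b)).image (· / N) := by
    intro x hx
    obtain ⟨p, rfl⟩ := exists_apply_eq_of_mem_lowValues hx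
    obtain ⟨h0, h2⟩ := apply_mem_lowValues.1 hx
    exact Finset.mem_image.2
      ⟨_, nsmul_add_apply_mem_lowValues hN (hb.apply_le p) (.inl h0) h2, div_eq p⟩
  have heq := Finset.eq_of_subset_of_card_le himage (Finset.card_image_le.trans hcard)
  have hinj : Set.InjOn (· / N) (lowValues (N * k + l) (N • a + b) : Set ℕ) :=
    Finset.card_image_iff.1 (Finset.card_image_le.antisymm (hcard.trans_eq (congrArg _ heq)))
  refine h.2 (hb.tightSet_subset_of_lowValues hk hN h.1 (fun p hp => ?_) fun p q hp hpq => ?_)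
  · rw [heq]
    exact Finset.mem_image.2 ⟨_, hp, div_eq p⟩
  · obtain ⟨h0, h2⟩ := apply_mem_lowValues.1 hp
    have := hinj (nsmul_add_apply_mem_lowValues hN (hb.apply_le p) (.inl h0) h2)
      (nsmul_add_apply_mem_lowValues hN (hb.apply_le q) (.inl (hpq ▸ h0)) (hpq ▸ h2))
      (by simp only [div_eq, hpq])
    simpa [hpq] using this

theorem faceRank_lt_faceRank {F F' : BoundedFace G} (h : F < F') :
    faceRank F' < faceRank F := by
  obtain ⟨k, a, ha, hrank⟩ := exists_card_lowValues_eq_faceRank F'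
  obtain ⟨l, b, hb⟩ := F.2
  have hlt : tightSet G l b ⊂ tightSet G k a := by
    rw [hb.tightSet_eq, ha.tightSet_eq]
    exact h
  have hsum : IsFaceCover G F ((l + 1) * k + l) ((l + 1) • a + b) :=
    hb.nsmul_add ha.isBasicCover.1 (hb.tightSet_eq ▸ hlt.subset) l.succ_pos
  calc faceRank F' = (lowValues k a).card := hrank.symm
    _ < (lowValues ((l + 1) * k + l) ((l + 1) • a + b)).card :=
      hb.isBasicCover.card_lowValues_lt ha.pos l.lt_succ_self hlt
    _ ≤ faceRank F := hsum.card_lowValues_le_faceRank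

end FaceRank

section GraphicalDimension

variable {n r k : ℕ} {G : SimpleGraph (Fin n)} {a : Fin n → ℕ}

theorem IsCover.isFreeParameterPair (ha : IsCover G k a) {A B : Fin r → Fin n}
    (hA : StrictAnti (a ∘ A)) (hlow : ∀ i, 2 * a (A i) < k) (hadj : ∀ i, G.Adj (A i) (B i))
    (hsum : ∀ i, a (A i) + a (B i) = k) : IsFreeParameterPair G A B := by
  refine ⟨hA.injective.of_comp, fun i j h => hA.injective ?_, fun i j h => ?_, fun i j h => ?_,
    hadj, fun i j h => hA.le_iff_ge.1 ?_⟩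
  · have := hsum i
    have := hsum j
    have : a (B i) = a (B j) := congrArg a h
    simp only [Function.comp_apply]
    omega
  · have := ha h
    have := hlow i
    have := hlow j
    omega
  · have := hsum j
    have := hlow i
    have := hlow j
    have : a (A i) = a (B j) := congrArg a h
    omega
  · have := ha h
    have := hsum j
    simp only [Function.comp_apply]
    omega

theorem IsBasicCover.hasFreeParameterSet (ha : IsBasicCover G k a) :
    HasFreeParameterSet G (lowValues k a).card := by
  let value (i : Fin (lowValues k a).card) : ℕ := (lowValues k a).orderEmbOfFin rfl i.rev
  have value_mem (i) : value i ∈ lowValues k a := Finset.orderEmbOfFin_mem _ rfl _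
  have value_anti : StrictAnti value := fun _ _ hij =>
    ((lowValues k a).orderEmbOfFin rfl).strictMono (Fin.rev_lt_rev.2 hij)
  choose A hA using fun i => exists_apply_eq_of_mem_lowValues (value_mem i)
  have hlow (i) : 0 < a (A i) ∧ 2 * a (A i) < k :=
    apply_mem_lowValues.1 ((hA i).symm ▸ value_mem i)
  choose B hadj hsum using fun i => ha.2 (A i) (hlow i).1
  have hcomp : a ∘ A = value := funext hA
  exact ⟨A, B, ha.1.isFreeParameterPair (hcomp ▸ value_anti) (fun i => (hlow i).2) hadj hsum⟩

theorem HasFreeParameterSet.hasMatchingOfSize (h : HasFreeParameterSet G r) :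
    HasMatchingOfSize G r := by
  obtain ⟨a, b, ha, hb, -, hab, hadj, -⟩ := h
  exact ⟨fun i => (a i, b i), hadj, fun i j hij =>
    ⟨ha.ne hij, hab i j, (hab j i).symm, hb.ne hij⟩⟩

theorem HasMatchingOfSize.le (h : HasMatchingOfSize G r) : r ≤ n := by
  obtain ⟨e, -, h⟩ := h
  have hinj : Function.Injective fun i => (e i).1 := fun i j =>
    not_imp_not.1 fun hne => (h i j hne).1
  simpa using Fintype.card_le_of_injective _ hinj

theorem bddAbove_hasMatchingOfSize (G : SimpleGraph (Fin n)) :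
    BddAbove {r | HasMatchingOfSize G r} :=
  ⟨n, fun _ h => h.le⟩

theorem bddAbove_hasFreeParameterSet (G : SimpleGraph (Fin n)) :
    BddAbove {r | HasFreeParameterSet G r} :=
  (bddAbove_hasMatchingOfSize G).mono fun _ h => h.hasMatchingOfSize

theorem gdim_le_matchingNumber_add_one (G : SimpleGraph (Fin n)) :
    gdim G ≤ matchingNumber G + 1 :=
  Nat.add_le_add_right (csSup_le' fun _ h =>
    le_csSup (bddAbove_hasMatchingOfSize G) h.hasMatchingOfSize) 1

theorem faceRank_lt_gdim (F : BoundedFace G) : faceRank F < gdim G := by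
  obtain ⟨k, a, ha, hrank⟩ := exists_card_lowValues_eq_faceRank F
  rw [← hrank]
  exact Nat.lt_succ_of_le
    (le_csSup (bddAbove_hasFreeParameterSet G) ha.isBasicCover.hasFreeParameterSet)

end GraphicalDimension

section Monomials

variable {V M : Type*} [Fintype V] [CommMonoid M]

/-- The monomial with exponent vector `a`, evaluated at the family `x`. -/
def powProd (x : V → M) (a : V → ℕ) : M :=
  ∏ v, x v ^ a v

theorem powProd_add (x : V → M) (a b : V → ℕ) :
    powProd x (a + b) = powProd x a * powProd x b := by
  simp [powProd, pow_add, Finset.prod_mul_distrib]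

theorem powProd_nsmul (x : V → M) (N : ℕ) (a : V → ℕ) :
    powProd x (N • a) = powProd x a ^ N := by
  simp [powProd, ← Finset.prod_pow, ← pow_mul, mul_comm]

theorem powProd_single [DecidableEq V] (x : V → M) (p : V) :
    powProd x (Pi.single p 1) = x p := by
  simp [powProd, Pi.single_apply, pow_ite]

theorem map_powProd {M' F : Type*} [CommMonoid M'] [FunLike F M M'] [MonoidHomClass F M M']
    (f : F) (x : V → M) (a : V → ℕ) : f (powProd x a) = powProd (f ∘ x) a := by
  simp [powProd]

theorem dvd_powProd (x : V → M) {a : V → ℕ} {v : V} (h : a v ≠ 0) : x v ∣ powProd x a :=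
  (dvd_pow_self _ h).trans (Finset.dvd_prod_of_mem _ (Finset.mem_univ v))

end Monomials

section MaxWeight

variable {V : Type*} [Fintype V] {G : SimpleGraph V} {Γ : Type*} [LinearOrderedCommGroupWithZero Γ]
  {w : V → Γ} {α : Γ} {e L : ℕ} {a b : V → ℕ}

/-- `α` is the largest value of the monomials of `2`-covers when the variables have the values `w`,
and `α ^ L` bounds the values of the monomials of `2 L`-covers. Degrees are even because
`2 L`-covers split into `2`-covers, whereas `2`-covers need not split into `1`-covers. -/
structure IsMaxWeight (G : SimpleGraph V) (w : V → Γ) (α : Γ) : Prop where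
  pos : 0 < α
  exists_eq : ∃ c, IsCover G 2 c ∧ powProd w c = α
  le_pow : ∀ ⦃L a⦄, IsCover G (2 * L) a → powProd w a ≤ α ^ L

theorem exists_isMaxWeight (hw : ∀ v, w v ≤ 1) (h0 : ∀ p q, G.Adj p q → w p ≠ 0 ∨ w q ≠ 0) :
    ∃ α, IsMaxWeight G w α := by
  classical
  let C : Set (V → ℕ) := {c | IsCover G 2 c ∧ c ≤ 2}
  have hCfin : C.Finite := (Set.finite_Iic (2 : V → ℕ)).subset fun c hc => hc.2
  let d : V → ℕ := fun p => if w p = 0 then 0 else 2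
  have hd : d ∈ C := by
    refine ⟨fun p q h => ?_, fun p => ?_⟩
    · have := h0 p q h
      simp only [d]
      split_ifs <;> simp_all
    · simp only [d, Pi.ofNat_apply]
      split_ifs <;> omega
  have hd0 : powProd w d ≠ 0 := by
    refine Finset.prod_ne_zero_iff.2 fun p _ => ?_
    by_cases hp : w p = 0 <;> simp [d, hp]
  obtain ⟨c, hc, hmax⟩ := C.exists_max_image (powProd w) hCfin ⟨d, hd⟩
  refine ⟨powProd w c, (zero_lt_iff.2 hd0).trans_le (hmax d hd), ⟨c, hc.1, rfl⟩, fun L => ?_⟩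
  induction L with
  | zero =>
    intro a _
    rw [pow_zero]
    exact Finset.prod_le_one' fun v _ => pow_le_one' (hw v) _
  | succ L ih =>
    intro a ha
    obtain ⟨c', b, hc', hle, hb, rfl⟩ := IsCover.exists_eq_add (k := 2 * L) ha
    rw [powProd_add, pow_succ']
    exact mul_le_mul' (hmax c' ⟨hc', hle⟩) (ih hb)

theorem IsMaxWeight.isBasicCover (hα : IsMaxWeight G w α) (hw : ∀ v, w v < 1)
    (ha : IsCover G (2 * L) a) (hwa : powProd w a = α ^ L) : IsBasicCover G (2 * L) a := by
  classical
  refine ha.isBasicCover_or_exists_eq_add_single.resolve_right ?_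
  rintro ⟨p, b, hb, rfl⟩
  refine hwa.not_lt ?_
  calc powProd w (b + Pi.single p 1) = powProd w b * w p := by
        rw [powProd_add, powProd_single]
    _ ≤ α ^ L * w p := mul_le_mul_left (hα.le_pow hb) _
    _ < α ^ L := mul_lt_of_lt_one_right (pow_pos hα.pos L) (hw p)

theorem IsMaxWeight.powProd_eq_of_tightSet_subset (hα : IsMaxWeight G w α) (hL : 0 < L)
    (hb : IsCover G (2 * L) b) (hwb : powProd w b = α ^ L) (ha : IsBasicCover G (2 * e) a)
    (h : tightSet G (2 * L) b ⊆ tightSet G (2 * e) a) : powProd w a = α ^ e := by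
  obtain ⟨c, hc, hsum⟩ := ha.exists_nsmul_eq_add hb h
  rw [mul_assoc] at hc
  have hdeg : e + e * (2 * L - 1) = L * (2 * e) := by
    obtain ⟨L, rfl⟩ := Nat.exists_eq_add_of_lt hL
    rw [show 2 * (0 + L + 1) - 1 = 2 * L + 1 by omega]
    ring
  refine (hα.le_pow ha.1).antisymm (le_of_mul_le_mul_right ?_ (pow_pos hα.pos (e * (2 * L - 1))))
  calc α ^ e * α ^ (e * (2 * L - 1)) = (α ^ L) ^ (2 * e) := by
        rw [← pow_add, hdeg, pow_mul]
    _ = powProd w a * powProd w c := by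
        rw [← hwb, ← powProd_nsmul, hsum, powProd_add]
    _ ≤ powProd w a * α ^ (e * (2 * L - 1)) := mul_le_mul_right (hα.le_pow hc) _

/-- Sums of covers of maximal weight again have maximal weight, and their tight sets intersect, so
there is a least one. -/
theorem IsMaxWeight.exists_least_face (hα : IsMaxWeight G w α) (hw : ∀ v, w v < 1) :
    ∃ (F : BoundedFace G) (L : ℕ) (b : V → ℕ), IsFaceCover G F (2 * L) b ∧ powProd w b = α ^ L ∧
      ∀ M a, IsCover G (2 * M) a → powProd w a = α ^ M → F ≤ tightSet G (2 * M) a := by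
  let O : Set (Set (V × V)) := {τ | ∃ L a, 0 < L ∧ IsCover G (2 * L) a ∧
    powProd w a = α ^ L ∧ tightSet G (2 * L) a = τ}
  obtain ⟨c, hc, hcα⟩ := hα.exists_eq
  have hO : O.Nonempty := ⟨_, 1, c, one_pos, hc, by rwa [pow_one], rfl⟩
  obtain ⟨τ, hτ⟩ := O.toFinite.exists_minimal hO
  obtain ⟨L, b, hL, hb, hbα, hbτ⟩ := hτ.prop
  have hface : IsFaceCover G τ (2 * L) b := ⟨by omega, hα.isBasicCover hw hb hbα, hbτ⟩
  refine ⟨⟨τ, _, _, hface⟩, L, b, hface, hbα, fun M a ha haα => ?_⟩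
  have hmem : τ ∩ tightSet G (2 * M) a ∈ O := by
    refine ⟨L + M, b + a, by omega, ?_, ?_, ?_⟩
    · rw [mul_add]
      exact hb.add ha
    · rw [powProd_add, hbα, haα, pow_add]
    · rw [mul_add, tightSet_add hb ha, hbτ]
  exact (hτ.le_of_le hmem Set.inter_subset_left).trans Set.inter_subset_right

theorem exists_face_powProd_lt {A : BoundedFace G → V → ℕ}
    (hA : ∀ F : BoundedFace G, IsFaceCover G F (2 * e) (A F)) (hw : ∀ v, w v < 1)
    (h0 : ∀ p q, G.Adj p q → w p ≠ 0 ∨ w q ≠ 0) :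
    ∃ F : BoundedFace G, powProd w (A F) ≠ 0 ∧ ∀ F', faceRank F' = faceRank F → F' ≠ F →
      powProd w (A F') < powProd w (A F) := by
  obtain ⟨α, hα⟩ := exists_isMaxWeight (fun v => (hw v).le) h0
  obtain ⟨F, L, b, hb, hbα, hleast⟩ := hα.exists_least_face hw
  have hF : powProd w (A F) = α ^ e :=
    hα.powProd_eq_of_tightSet_subset (by have := hb.pos; omega) hb.isBasicCover.1 hbα
      (hA F).isBasicCover (hb.tightSet_eq.trans (hA F).tightSet_eq.symm).subset
  refine ⟨F, by rw [hF]; exact (pow_pos hα.pos e).ne', fun F' hrank hne => ?_⟩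
  rw [hF]
  refine (hα.le_pow (hA F').isBasicCover.1).lt_of_ne fun hF' => ?_
  have hle : F ≤ F' := (hleast e _ (hA F').isBasicCover.1 hF').trans_eq (hA F').tightSet_eq
  exact (faceRank_lt_faceRank (hle.lt_of_ne hne.symm)).ne hrank

end MaxWeight

section FaceSum

universe u

variable {V : Type*} {R : Type u} [Fintype V] [CommRing R] {G : SimpleGraph V}
  {A : BoundedFace G → V → ℕ} {x : V → R} {e : ℕ}

open Classical in
/-- The sum of the monomials chosen for the bounded faces of rank `i`, with exponents `A` and
evaluated at the family `x`. -/
noncomputable def faceSum (A : BoundedFace G → V → ℕ) (x : V → R) (i : ℕ) : R :=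
  ∑ F : BoundedFace G with faceRank F = i, powProd x (A F)

theorem exists_face_valuation_faceSum_ne_zero
    (hA : ∀ F : BoundedFace G, IsFaceCover G F (2 * e) (A F)) {Γ : Type*}
    [LinearOrderedCommGroupWithZero Γ] (v : Valuation R Γ) (hx : ∀ p, v (x p) < 1)
    (h0 : ∀ p q, G.Adj p q → v (x p) ≠ 0 ∨ v (x q) ≠ 0) :
    ∃ F : BoundedFace G, v (faceSum A x (faceRank F)) ≠ 0 := by
  classical
  obtain ⟨F, hF, hlt⟩ := exists_face_powProd_lt hA hx h0
  refine ⟨F, ?_⟩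
  rw [faceSum, v.map_sum_eq_of_lt (j := F) (by simp), map_powProd]
  · exact hF
  · intro F' hF'
    obtain ⟨hrank, hne⟩ : faceRank F' = faceRank F ∧ F' ≠ F := by simpa using hF'
    rw [map_powProd, map_powProd]
    exact hlt F' hrank hne

theorem exists_valuation_supp_eq_and_lt_one [IsLocalRing R] (Q : Ideal R) [Q.IsPrime] :
    ∃ (Γ : Type u) (_ : LinearOrderedCommGroupWithZero Γ) (v : Valuation R Γ),
      v.supp = Q ∧ ∀ y ∈ IsLocalRing.maximalIdeal R, v y < 1 := by
  obtain ⟨B, hB, hloc⟩ := IsLocalRing.exists_factor_valuationRing (algebraMap R Q.ResidueField)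
  refine ⟨_, inferInstance, B.valuation.comap (algebraMap R Q.ResidueField), ?_, fun y hy => ?_⟩
  · ext y
    simp [Valuation.mem_supp_iff]
  · refine (B.valuation_lt_one_iff ⟨_, hB y⟩).1 ?_
    rw [IsLocalRing.mem_maximalIdeal, mem_nonunits_iff] at hy ⊢
    exact fun hu => hy (hloc.map_nonunit y hu)

theorem exists_adj_mem_of_faceSum_mem [IsLocalRing R]
    (hA : ∀ F : BoundedFace G, IsFaceCover G F (2 * e) (A F))
    (hx : ∀ p, x p ∈ IsLocalRing.maximalIdeal R) {Q : Ideal R} [Q.IsPrime]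
    (hQ : ∀ F : BoundedFace G, faceSum A x (faceRank F) ∈ Q) :
    ∃ p q, G.Adj p q ∧ x p ∈ Q ∧ x q ∈ Q := by
  obtain ⟨Γ, _, v, rfl, hv⟩ := exists_valuation_supp_eq_and_lt_one Q
  by_contra! h
  obtain ⟨F, hF⟩ := exists_face_valuation_faceSum_ne_zero hA v (fun p => hv _ (hx p))
    fun p q hpq => or_iff_not_imp_left.2 fun hp => h p q hpq (not_not.1 hp)
  exact hF (hQ F)

end FaceSum

section CoverIdeal

variable {K : Type*} [Field K] {n : ℕ} {G : SimpleGraph (Fin n)}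

theorem ara_le {R : Type*} [CommRing R] {I : Ideal R} {r : ℕ} (f : Fin r → R)
    (h : (Ideal.span (Set.range f)).radical = I.radical) : ara I ≤ r :=
  Nat.sInf_le ⟨f, h⟩

theorem powProd_X_mem_coverIdeal {k : ℕ} (hk : 0 < k) {a : Fin n → ℕ} (ha : IsCover G k a) :
    powProd X a ∈ coverIdeal K G := by
  simp only [coverIdeal, Ideal.mem_iInf]
  intro e he
  induction e using Sym2.ind with
  | _ p q =>
    have hpq := ha he
    obtain ⟨v, hv, hav⟩ : ∃ v ∈ s(p, q), a v ≠ 0 := by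
      by_contra! h
      simp_all
    exact Ideal.mem_of_dvd _ (dvd_powProd X hav) (Ideal.subset_span ⟨v, hv, rfl⟩)

theorem coverIdeal_le_of_adj {p q : Fin n} (h : G.Adj p q) {I : Ideal (MvPolynomial (Fin n) K)}
    (hp : X p ∈ I) (hq : X q ∈ I) : coverIdeal K G ≤ I := by
  refine (iInf₂_le s(p, q) h).trans (Ideal.span_le.2 ?_)
  rintro _ ⟨v, hv, rfl⟩
  rcases Sym2.mem_iff.1 hv with rfl | rfl
  · exact hp
  · exact hq

variable {R : Type*} [CommRing R] (φ : MvPolynomial (Fin n) K →+* R)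

theorem faceSum_mem_map_coverIdeal {e : ℕ} {A : BoundedFace G → Fin n → ℕ}
    (hA : ∀ F : BoundedFace G, IsFaceCover G F (2 * e) (A F)) (i : ℕ) :
    faceSum A (φ ∘ X) i ∈ (coverIdeal K G).map φ := by
  refine Ideal.sum_mem _ fun F _ => ?_
  rw [← map_powProd]
  exact Ideal.mem_map_of_mem φ (powProd_X_mem_coverIdeal (hA F).pos (hA F).isBasicCover.1)

theorem ara_coverIdeal_le_gdim_general [IsLocalRing R]
    (hφ : ∀ i, φ (X i) ∈ IsLocalRing.maximalIdeal R) (G : SimpleGraph (Fin n)) :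
    ara ((coverIdeal K G).map φ) ≤ gdim G ∧
      ara ((coverIdeal K G).map φ) ≤ matchingNumber G + 1 := by
  suffices h : ara ((coverIdeal K G).map φ) ≤ gdim G from
    ⟨h, h.trans (gdim_le_matchingNumber_add_one G)⟩
  obtain ⟨e, A, hA⟩ := exists_isFaceCover_two_mul G
  let f (i : Fin (gdim G)) : R := faceSum A (φ ∘ X) i
  refine ara_le f (le_antisymm (Ideal.radical_mono (Ideal.span_le.2 ?_)) ?_)
  · rintro _ ⟨i, rfl⟩
    exact faceSum_mem_map_coverIdeal φ hA i
  · rw [Ideal.radical_le_radical_iff, Ideal.radical_eq_sInf]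
    refine le_sInf fun Q ⟨hfQ, _⟩ => ?_
    obtain ⟨p, q, hpq, hp, hq⟩ := exists_adj_mem_of_faceSum_mem hA hφ (Q := Q) fun F =>
      hfQ (Ideal.subset_span ⟨⟨_, faceRank_lt_gdim F⟩, rfl⟩)
    exact Ideal.map_le_iff_le_comap.2 (coverIdeal_le_of_adj hpq hp hq)

end CoverIdeal

theorem algebraMap_X_mem_maximalIdeal (K : Type*) [Field K] {n : ℕ} (i : Fin n) :
    algebraMap (MvPolynomial (Fin n) K) (SLoc K n) (X i) ∈
      IsLocalRing.maximalIdeal (SLoc K n) := by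
  rw [← Localization.AtPrime.map_eq_maximalIdeal]
  exact Ideal.mem_map_of_mem _ (Ideal.subset_span ⟨i, rfl⟩)

/-- Let `K` be an infinite field and `G` a graph. Then
`ara(J(G)S_m) ≤ gdim(G)`; in particular `ara(J(G)S_m) ≤ ν(G) + 1`. -/
theorem ara_coverIdeal_le_gdim (K : Type*) [Field K] [Infinite K] {n : ℕ}
    (G : SimpleGraph (Fin n)) (hiso : ∀ v : Fin n, ∃ w, G.Adj v w) :
    ara ((coverIdeal K G).map (algebraMap (MvPolynomial (Fin n) K) (SLoc K n))) ≤ gdim G ∧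
    ara ((coverIdeal K G).map (algebraMap (MvPolynomial (Fin n) K) (SLoc K n))) ≤
      matchingNumber G + 1 :=
  ara_coverIdeal_le_gdim_general _ (algebraMap_X_mem_maximalIdeal K) G
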